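/- Let n ≥ 3 be an odd integer and let k ≥ 2 be an integer with 3 ∤ (4k^n − 1), and set d = 4(1 − 4k^n)^n. Then d + 36 = 4(9 − (4k^n − 1)^n), so ℚ(√(d + 36)) = ℚ(√(9 − (4k^n − 1)^n)), and n divides the class number of the imaginary quadratic field ℚ(√(d + 36)). -/

import Mathlib

/-- The quadratic field `ℚ(√d)`, realized as the subfield of `ℂ` generated over `ℚ`
by a complex square root of `d`. -/
noncomputable def Qsqrt (d : ℤ) : IntermediateField ℚ ℂ :=
  IntermediateField.adjoin ℚ {((d : ℂ) ^ ((1 : ℂ) / 2))}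

/-- The class number of `ℚ(√d)`: the order of the ideal class group of its ring of
integers. -/
noncomputable def classNumSqrt (d : ℤ) : ℕ :=
  Nat.card (ClassGroup (NumberField.RingOfIntegers (Qsqrt d)))

def VV (P Q : ℤ) : ℕ → ℤ
  | 0 => 2
  | 1 => P
  | (j+2) => P * VV P Q (j+1) - Q * VV P Q j

def WW (Q : ℤ) : ℕ → ℤ
  | 0 => 1
  | 1 => 3
  | (j+2) => 6 * WW Q (j+1) - Q * WW Q j

def XY : ℕ → ℤ × ℤ
  | 0 => (1, 0)
  | (j+1) => (3 * (XY j).1 + 10 * (XY j).2, (XY j).1 + 3 * (XY j).2)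

lemma VV_eq {R : Type*} [CommRing R] (P Q : ℤ) (z z' : R) (h1 : z + z' = P) (h2 : z * z' = Q) (j : ℕ) :
    z ^ j + z' ^ j = VV P Q j := by
  induction j using Nat.twoStepInduction with
  | zero => simp [VV]; norm_num
  | one => simp [VV, h1]
  | more j ih1 ih2 =>
    simp only [VV]
    push_cast
    rw [← ih1, ← ih2, ← h1, ← h2]; ring

lemma VV_six (Q : ℤ) (j : ℕ) : VV 6 Q j = 2 * WW Q j := by
  induction j using Nat.twoStepInduction with
  | zero => simp [VV, WW]
  | one => simp [VV, WW]
  | more j ih1 ih2 => simp only [VV, WW, ih1, ih2]; ring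

lemma WW_modEq (Q : ℤ) (j : ℕ) : (Q + 1) ∣ WW Q j - WW (-1) j := by
  induction j using Nat.twoStepInduction with
  | zero => simp [WW]
  | one => simp [WW]
  | more j ih1 ih2 =>
    obtain ⟨a, ha⟩ := ih1
    obtain ⟨b, hb⟩ := ih2
    refine ⟨6 * b + a - WW Q j, ?_⟩
    simp only [WW]
    linear_combination 6 * hb + ha

lemma WW_XY (j : ℕ) : WW (-1) j = (XY j).1 := by
  induction j using Nat.twoStepInduction with
  | zero => simp [XY, WW]
  | one => simp [XY, WW]
  | more j ih1 ih2 => simp only [XY, WW, ih1, ih2]; ring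

lemma XY_add (a b : ℕ) : (XY (a+b)).1 = (XY a).1 * (XY b).1 + 10 * (XY a).2 * (XY b).2 ∧
    (XY (a+b)).2 = (XY a).1 * (XY b).2 + (XY a).2 * (XY b).1 := by
  induction b with
  | zero => simp [XY]
  | succ b ih =>
    rw [← add_assoc]
    simp only [XY, ih.1, ih.2]
    constructor <;> ring

lemma XY_pell (j : ℕ) : (XY j).1 ^ 2 - 10 * (XY j).2 ^ 2 = (-1) ^ j := by
  induction j with
  | zero => simp [XY]
  | succ j ih => rw [pow_succ (-1 : ℤ), ← ih]; simp only [XY]; ring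

lemma XY_pos (j : ℕ) : 0 < (XY j).1 ∧ 0 ≤ (XY j).2 := by
  induction j with
  | zero => simp [XY]
  | succ j ih => simp only [XY]; omega

lemma XY_pos' (j : ℕ) (hj : 1 ≤ j) : 3 ≤ (XY j).1 ∧ 1 ≤ (XY j).2 := by
  obtain ⟨i, rfl⟩ := Nat.exists_eq_add_of_le' hj
  have := XY_pos i
  simp only [XY]; omega

lemma XY_bound (j : ℕ) : (XY j).1 ≤ 7 ^ j ∧ 5 * (XY j).2 ≤ 2 * 7 ^ j := by
  induction j with
  | zero => simp [XY]
  | succ j ih =>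
    have : (0:ℤ) < 7 ^ j := by positivity
    simp only [XY, pow_succ]; omega

lemma XY_odd (j : ℕ) : (XY j).1 % 2 = 1 ∧ (XY j).2 % 2 = (j % 2 : ℕ) := by
  induction j with
  | zero => simp [XY]
  | succ j ih => simp only [XY]; omega

lemma XY_two (e j : ℕ) (h : (2:ℤ) ^ e ∣ (XY j).2) : 2 ^ e ∣ j := by
  induction e generalizing j with
  | zero => simp
  | succ e ih =>
    have h2 : (XY j).2 % 2 = 0 := by
      obtain ⟨c, hc⟩ := h
      rw [hc, pow_succ]; rw [mul_assoc, mul_left_comm]; omega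
    have h3 := (XY_odd j).2
    obtain ⟨i, rfl⟩ : ∃ i, j = i + i := ⟨j / 2, by omega⟩
    rw [(XY_add i i).2, pow_succ] at h
    have h4 : (2:ℤ) ^ e ∣ (XY i).1 * (XY i).2 := by
      obtain ⟨c, hc⟩ := h
      exact ⟨c, by linarith⟩
    have hc : IsCoprime ((2:ℤ) ^ e) (XY i).1 := by
      apply IsCoprime.pow_left
      refine ⟨-((XY i).1 / 2), 1, ?_⟩
      have := (XY_odd i).1
      omega
    have := ih i (hc.dvd_of_dvd_mul_left h4)
    rw [pow_succ, ← mul_two]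
    exact Nat.mul_dvd_mul_right this 2

lemma XY_cop (j : ℕ) : IsCoprime (XY j).2 (XY (j+1)).2 := by
  have h := XY_pell j
  have h2 : IsCoprime (XY j).2 (XY j).1 := by
    rcases neg_one_pow_eq_or ℤ j with h' | h' <;> rw [h'] at h
    · exact ⟨-10 * (XY j).2, (XY j).1, by linarith⟩
    · exact ⟨10 * (XY j).2, -(XY j).1, by linarith⟩
  simp only [XY]
  exact h2.add_mul_left_right 3 |> fun h => by rwa [mul_comm] at h

lemma pp_dvd (q e h : ℕ) (hq : q.Prime) (hd : (q:ℤ) ^ e ∣ (XY h).2 * (XY (h+1)).2) :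
    (q:ℤ) ^ e ∣ (XY h).2 ∨ (q:ℤ) ^ e ∣ (XY (h+1)).2 := by
  have hp := Nat.prime_iff_prime_int.mp hq
  by_cases hx : (q:ℤ) ∣ (XY h).2
  · left
    have : ¬ (q:ℤ) ∣ (XY (h+1)).2 := fun hy => hp.not_isUnit ((XY_cop h).isUnit_of_dvd' hx hy)
    exact (((Prime.coprime_iff_not_dvd hp).mpr this).pow_left).dvd_of_dvd_mul_right hd
  · right
    exact (((Prime.coprime_iff_not_dvd hp).mpr hx).pow_left).dvd_of_dvd_mul_left hd

lemma X_ne (n : ℕ) (hn : 3 ≤ n) (k : ℤ) (hk : 2 ≤ k) (h : ℕ) (hh : 1 ≤ h) (hle : 2 * h + 1 ≤ n)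
    (hd : 4 * k ^ n ∣ (XY (2 * h + 1)).1 - 3) : False := by
  have hadd := (XY_add h (h+1)).1
  rw [show h + (h + 1) = 2 * h + 1 by ring] at hadd
  have hpell := XY_pell h
  have hX1 : (XY (h+1)).1 = 3 * (XY h).1 + 10 * (XY h).2 := rfl
  have hY1 : (XY (h+1)).2 = (XY h).1 + 3 * (XY h).2 := rfl
  have hdiff : (XY h).1 * (XY (h+1)).1 - 10 * (XY h).2 * (XY (h+1)).2 = 3 * (-1) ^ h := by
    rw [hX1, hY1, ← hpell]; ring
  have hposh := XY_pos' h hh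
  have hposh1 := XY_pos' (h+1) (by omega)
  rcases Nat.even_or_odd h with he | ho
  · rw [he.neg_one_pow] at hdiff
    have hX : (XY (2 * h + 1)).1 - 3 = 4 * (5 * ((XY h).2 * (XY (h+1)).2)) := by
      rw [hadd]; linarith
    have hXpos : 0 < (XY (2 * h + 1)).1 - 3 := by rw [hX]; nlinarith
    by_cases h7 : 7 ≤ k
    · have h1 := Int.le_of_dvd hXpos hd
      have h2 := (XY_bound (2 * h + 1)).1
      have h3 : (7:ℤ) ^ (2 * h + 1) ≤ 7 ^ n := pow_le_pow_right₀ (by norm_num) hle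
      have h4 : (7:ℤ) ^ n ≤ k ^ n := pow_le_pow_left₀ (by norm_num) h7 n
      have : 0 < k ^ n := by positivity
      linarith
    · rw [hX] at hd
      have hd' := Int.dvd_of_mul_dvd_mul_left (by norm_num) hd
      have hbh := (XY_bound h).2
      have hbh1 := (XY_bound (h+1)).2
      have key : ∀ q : ℕ, q.Prime → (q : ℤ) ∣ k → (q:ℤ) ^ n ∣ 5 * ((XY h).2 * (XY (h+1)).2) :=
        fun q _ hqk => (pow_dvd_pow_of_dvd hqk n).trans hd'
      have h2h : 2 * h + 1 ≤ n := hle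
      have small : ∀ q : ℕ, q.Prime → 3 ≤ q → (q:ℤ) ^ (2 * h + 1) ∣ (XY h).2 * (XY (h+1)).2 → False := by
        intro q hq h3q hdq
        have hqp : (3:ℤ) ^ (2 * h + 1) ≤ (q:ℤ) ^ (2 * h + 1) :=
          pow_le_pow_left₀ (by norm_num) (by exact_mod_cast h3q) _
        have h9 : (3:ℤ) ^ (2 * h + 1) = 3 * 9 ^ h := by rw [pow_succ, pow_mul]; norm_num; ring
        have h79 : (7:ℤ) ^ h ≤ 9 ^ h := pow_le_pow_left₀ (by norm_num) (by norm_num) _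
        have hp7 : 0 < (7:ℤ) ^ h := by positivity
        rw [pow_succ] at hbh1
        rcases pp_dvd q _ h hq hdq with h' | h'
        · have := Int.le_of_dvd (by omega) h'; omega
        · have := Int.le_of_dvd (by omega) h'; omega
      have even : (2:ℤ) ∣ k → False := by
        intro hk2
        have h1 := key 2 Nat.prime_two (by exact_mod_cast hk2)
        have h2 : ((2:ℕ):ℤ) ^ n ∣ (XY h).2 * (XY (h+1)).2 :=
          IsCoprime.dvd_of_dvd_mul_left (IsCoprime.pow_left (by norm_num)) h1
        have hlt : n < 2 ^ n := Nat.lt_two_pow_self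
        rcases pp_dvd 2 _ h Nat.prime_two h2 with h' | h'
        · have := Nat.le_of_dvd (by omega) (XY_two n h (by exact_mod_cast h'))
          clear small key h1 h2
          omega
        · have := Nat.le_of_dvd (by omega) (XY_two n (h + 1) (by exact_mod_cast h'))
          clear small key h1 h2
          omega
      interval_cases k
      · exact even (by norm_num)
      · have := key 3 Nat.prime_three (by norm_num)
        have h1 : ((3:ℕ):ℤ) ^ n ∣ (XY h).2 * (XY (h+1)).2 :=
          IsCoprime.dvd_of_dvd_mul_left (IsCoprime.pow_left (by norm_num)) this
        exact small 3 Nat.prime_three le_rfl ((pow_dvd_pow _ hle).trans h1)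
      · exact even (by norm_num)
      · have h1 := (pow_dvd_pow _ hle).trans (key 5 Nat.prime_five (by norm_num))
        rw [pow_succ, mul_comm] at h1
        have h2 : ((5:ℕ):ℤ) ^ (2 * h) ∣ (XY h).2 * (XY (h+1)).2 :=
          Int.dvd_of_mul_dvd_mul_left (a := 5) (by norm_num) (by exact_mod_cast h1)
        have h21 : (21:ℤ) ^ h ≤ 25 ^ h := pow_le_pow_left₀ (by norm_num) (by norm_num) _
        have h3 : (21:ℤ) ^ h = 3 ^ h * 7 ^ h := by rw [← mul_pow]; norm_num
        have h4 : (3:ℤ) ≤ 3 ^ h := le_self_pow₀ (by norm_num) (by omega)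
        have hp7 : 0 < (7:ℤ) ^ h := by positivity
        have h5 : 3 * (7:ℤ) ^ h ≤ 3 ^ h * 7 ^ h := by nlinarith
        have h6 : ((5:ℕ):ℤ) ^ (2 * h) = 25 ^ h := by rw [pow_mul]; norm_num
        rw [pow_succ] at hbh1
        rcases pp_dvd 5 _ h Nat.prime_five h2 with h' | h'
        · have := Int.le_of_dvd (by omega) h'; rw [h6] at this; linarith
        · have := Int.le_of_dvd (by omega) h'; rw [h6] at this; linarith
      · exact even (by norm_num)
  · rw [ho.neg_one_pow] at hdiff
    have hX : (XY (2 * h + 1)).1 - 3 = 2 * ((XY h).1 * (XY (h+1)).1) := by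
      rw [hadd]; linarith
    have h1 : Odd ((XY h).1 * (XY (h+1)).1) :=
      (Int.odd_iff.mpr (XY_odd h).1).mul (Int.odd_iff.mpr (XY_odd (h+1)).1)
    obtain ⟨c, hc⟩ := h1
    obtain ⟨e, he⟩ := hd
    rw [hX, hc, mul_assoc] at he
    generalize k ^ n * e = z at he
    omega

lemma VV_dvd (P Q : ℤ) (j : ℕ) : P ∣ VV P Q (2 * j + 1) := by
  induction j with
  | zero => simp [VV]
  | succ j ih =>
    rw [show 2 * (j + 1) + 1 = (2 * j + 1) + 2 by ring]
    simp only [VV]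
    exact dvd_sub (dvd_mul_right _ _) (ih.mul_left _)

lemma VV_par (P Q : ℤ) (hP : P % 2 = 1) (hQ : Q % 2 = 1) (j : ℕ) :
    VV P Q (3 * j) % 2 = 0 ∧ VV P Q (3 * j + 1) % 2 = 1 ∧ VV P Q (3 * j + 2) % 2 = 1 := by
  have key : ∀ i, VV P Q (i + 2) % 2 = (VV P Q (i+1) + VV P Q i) % 2 := by
    intro i
    simp only [VV]
    rw [Int.sub_emod, Int.mul_emod, hP, Int.mul_emod Q, hQ]
    omega
  induction j with
  | zero =>
    have := key 0
    simp only [VV] at this ⊢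
    omega
  | succ j ih =>
    have h1 := key (3 * j + 1)
    have h2 := key (3 * j + 2)
    have h3 := key (3 * j + 3)
    rw [show 3 * (j + 1) = 3 * j + 3 by ring]
    simp only [add_assoc, Nat.reduceAdd] at *
    omega

lemma VV_frob_aux (F : Type*) [Field F] [IsAlgClosed F] (P Q : ℤ) (p : ℕ) [Fact p.Prime] [CharP F p]
    (hp2 : p ≠ 2) : (p:ℤ) ∣ VV P Q p - P := by
  have hp : p.Prime := Fact.out
  have h2 : (2 : F) ≠ 0 := by
    intro h
    have : ((2:ℕ) : F) = 0 := by exact_mod_cast h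
    rw [CharP.cast_eq_zero_iff F p] at this
    exact hp2 ((Nat.prime_dvd_prime_iff_eq hp Nat.prime_two).mp this)
  obtain ⟨s, hs⟩ := IsAlgClosed.exists_eq_mul_self ((P:F) ^ 2 - 4 * Q)
  have e2 : ((P:F) + s) / 2 + ((P:F) - s) / 2 = P := by field_simp; ring
  have e := VV_eq P Q (((P:F) + s) / 2) (((P:F) - s) / 2) e2
    (by field_simp; linear_combination hs) p
  rw [← add_pow_char] at e
  rw [e2] at e
  have e3 : (P:F) ^ p = P := by
    have : ((P : ZMod p)) ^ p = P := ZMod.pow_card _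
    have := congrArg (ZMod.castHom (dvd_refl p) F) this
    rwa [map_pow, map_intCast] at this
  rw [e3] at e
  rw [← CharP.intCast_eq_zero_iff F p]
  push_cast
  rw [e, sub_self]

lemma VV_frob (P Q : ℤ) (p : ℕ) (hp : p.Prime) (hp2 : p ≠ 2) : (p:ℤ) ∣ VV P Q p - P := by
  have := Fact.mk hp
  have : CharP (AlgebraicClosure (ZMod p)) p :=
    charP_of_injective_algebraMap (algebraMap (ZMod p) (AlgebraicClosure (ZMod p))).injective p
  exact VV_frob_aux (AlgebraicClosure (ZMod p)) P Q p hp2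

lemma arith (n : ℕ) (hn : 3 ≤ n) (hnodd : Odd n) (k : ℤ) (hk : 2 ≤ k) (p : ℕ) (hp : p.Prime)
    (hpn : p ∣ n) (P : ℤ) (hV : VV P ((4 * k ^ n - 1) ^ (n / p)) p = 6) : False := by
  have hp2 : p ≠ 2 := by
    rintro rfl
    obtain ⟨a, ha⟩ := hnodd
    omega
  have hpodd : Odd p := hp.odd_of_ne_two hp2
  have hqodd : Odd (n / p) := by
    rw [← Nat.div_mul_cancel hpn] at hnodd
    exact (Nat.odd_mul.mp hnodd).1
  have hM : 4 * k ^ n ∣ (4 * k ^ n - 1) ^ (n / p) + 1 := by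
    have := hqodd.add_dvd_pow_add_pow (4 * k ^ n - 1) 1
    simpa using this
  have hMo : ((4 * k ^ n - 1) ^ (n / p)) % 2 = 1 := by
    obtain ⟨c, hc⟩ := hM
    rw [mul_assoc] at hc
    omega
  generalize (4 * k ^ n - 1) ^ (n / p) = M at *
  obtain ⟨h, hh⟩ := hpodd
  have hd6 : P ∣ 6 := by rw [← hV, hh]; exact VV_dvd _ _ _
  have hf := VV_frob P M p hp hp2
  rw [hV] at hf
  have hple := Nat.le_of_dvd (by omega) hpn
  have hpge := hp.two_le
  have hb : P ≤ 6 := Int.le_of_dvd (by norm_num) hd6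
  have hb' : -6 ≤ P := by
    have := Int.le_of_dvd (by norm_num) ((neg_dvd).mpr hd6); omega
  by_cases hp3 : p = 3
  · subst hp3
    simp only [VV] at hV
    have : P = -6 ∨ P = -3 ∨ P = 0 ∨ P = 3 ∨ P = 6 := by omega
    rcases this with rfl | rfl | rfl | rfl | rfl <;> omega
  have hp3' : ¬ 3 ∣ p := fun h => hp3 ((Nat.prime_dvd_prime_iff_eq Nat.prime_three hp).mp h).symm
  have hPe : P % 2 = 0 := by
    by_contra hP
    have := VV_par P M (by omega) hMo (p / 3)
    have h3 : p = 3 * (p / 3) + 1 ∨ p = 3 * (p / 3) + 2 := by omega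
    rcases h3 with h3 | h3 <;> rw [h3] at hV <;> omega
  have hP6 : P = 6 := by
    by_contra hne
    have h1 : 0 < 6 - P := by omega
    have h2 := Int.le_of_dvd h1 hf
    have h3 : p ≤ 12 := by omega
    interval_cases P <;> first | omega | (exfalso; revert hd6; decide) | (interval_cases p <;> omega)
  subst hP6
  rw [VV_six] at hV
  have h1 := WW_modEq M p
  rw [WW_XY] at h1
  refine X_ne n hn k hk h (by omega) (by omega) ?_
  rw [← hh]
  have h2 := hM.trans h1
  rw [show WW M p = 3 by omega] at h2
  rw [← neg_sub]
  exact (dvd_neg).mpr h2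

open ComplexConjugate in
lemma conj_w (N : ℤ) (hN : N < 0) (w : ℂ) (hw : w ^ 2 = N) : conj w = -w := by
  have h1 := congrArg Complex.re hw
  have h2 := congrArg Complex.im hw
  simp [pow_two] at h1 h2
  have hN' : (N:ℝ) < 0 := by exact_mod_cast hN
  have hre : w.re = 0 := by
    by_contra hne
    have : w.im = 0 := by
      have h3 : w.re * w.im = 0 := by linarith
      exact (mul_eq_zero.mp h3).resolve_left hne
    rw [this] at h1
    nlinarith [mul_self_nonneg w.re]
  apply Complex.ext <;> simp [hre]

lemma mem_rep (N : ℤ) (w : ℂ) (hw : w ^ 2 = N) (x : ℂ)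
    (hx : x ∈ IntermediateField.adjoin ℚ {w}) : ∃ r s : ℚ, x = r + s * w := by
  have hwi : IsIntegral ℚ w := by
    apply IsIntegral.of_pow (n := 2) (by norm_num)
    rw [hw]
    exact_mod_cast isIntegral_algebraMap (R := ℚ) (A := ℂ) (x := (N:ℚ))
  rw [← IntermediateField.mem_toSubalgebra,
    IntermediateField.adjoin_simple_toSubalgebra_of_isAlgebraic hwi.isAlgebraic] at hx
  induction hx using Algebra.adjoin_induction with
  | mem y hy => exact ⟨0, 1, by simp [Set.mem_singleton_iff.mp hy]⟩
  | algebraMap r => exact ⟨r, 0, by simp⟩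
  | add y z _ _ hy hz =>
    obtain ⟨a, b, rfl⟩ := hy
    obtain ⟨c, e, rfl⟩ := hz
    exact ⟨a + c, b + e, by push_cast; ring⟩
  | mul y z _ _ hy hz =>
    obtain ⟨a, b, rfl⟩ := hy
    obtain ⟨c, e, rfl⟩ := hz
    exact ⟨a * c + b * e * N, a * e + b * c, by push_cast; linear_combination (b * e : ℂ) * hw⟩

lemma rat_int (q : ℚ) (h : IsIntegral ℤ (q : ℂ)) : ∃ z : ℤ, q = z := by
  have h1 : IsIntegral ℤ q := by
    have : IsIntegral ℤ (algebraMap ℚ ℂ q) := by simpa using h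
    exact (isIntegral_algebraMap_iff (algebraMap ℚ ℂ).injective).mp this
  obtain ⟨z, hz⟩ := IsIntegrallyClosed.isIntegral_iff.mp h1
  exact ⟨z, by simpa using hz.symm⟩

open ComplexConjugate in
lemma int_rep (N : ℤ) (hN : N < 0) (w : ℂ) (hw : w ^ 2 = N) (x : ℂ)
    (hx : x ∈ IntermediateField.adjoin ℚ {w}) (hi : IsIntegral ℤ x) :
    ∃ (r s : ℚ) (T M : ℤ), x = r + s * w ∧ x + conj x = T ∧ x * conj x = M ∧
      2 * r = T ∧ r ^ 2 - s ^ 2 * N = M := by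
  obtain ⟨r, s, hrs⟩ := mem_rep N w hw x hx
  have hc : conj x = r - s * w := by
    rw [hrs]; simp [conj_w N hN w hw]; ring
  have hci : IsIntegral ℤ (conj x) := hi.map ((starRingEnd ℂ).toIntAlgHom)
  have h1 : x + conj x = ((2 * r : ℚ) : ℂ) := by rw [hc, hrs]; push_cast; ring
  have h2 : x * conj x = ((r ^ 2 - s ^ 2 * N : ℚ) : ℂ) := by
    rw [hc, hrs]; push_cast; linear_combination (-s ^ 2 : ℂ) * hw
  obtain ⟨T, hT⟩ := rat_int _ (h1 ▸ hi.add hci)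
  obtain ⟨M, hM⟩ := rat_int _ (h2 ▸ hi.mul hci)
  refine ⟨r, s, T, M, hrs, ?_, ?_, hT, hM⟩
  · rw [h1, hT]; simp
  · rw [h2, hM]; simp

lemma not_sq (N : ℤ) (h : N % 4 = 2) : ¬ IsSquare (N : ℚ) := by
  rw [Rat.isSquare_intCast_iff]
  rintro ⟨a, rfl⟩
  have : a % 4 = 0 ∨ a % 4 = 1 ∨ a % 4 = 2 ∨ a % 4 = 3 := by omega
  rcases this with h' | h' | h' | h' <;> simp [Int.mul_emod, h'] at h

lemma unit_pm (N : ℤ) (hN : N < 0) (hN4 : N % 4 = 2) (w : ℂ) (hw : w ^ 2 = N) (u v : ℂ)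
    (hu : u ∈ IntermediateField.adjoin ℚ {w}) (hv : v ∈ IntermediateField.adjoin ℚ {w})
    (hui : IsIntegral ℤ u) (hvi : IsIntegral ℤ v) (huv : u * v = 1) : u = 1 ∨ u = -1 := by
  obtain ⟨r, s, T, M, h1, h2, h3, h4, h5⟩ := int_rep N hN w hw u hu hui
  obtain ⟨r', s', T', M', h1', h2', h3', h4', h5'⟩ := int_rep N hN w hw v hv hvi
  have hNq : (N:ℚ) < 0 := by exact_mod_cast hN
  have hM0 : 0 ≤ M := by
    have : (0:ℚ) ≤ M := by rw [← h5]; nlinarith [sq_nonneg r, sq_nonneg s]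
    exact_mod_cast this
  have hMM : M * M' = 1 := by
    have : (M:ℂ) * M' = 1 := by
      rw [← h3, ← h3', mul_mul_mul_comm, huv, ← map_mul, huv]; simp
    exact_mod_cast this
  have hM1 : M = 1 := by
    rcases Int.eq_one_or_neg_one_of_mul_eq_one hMM with h | h <;> omega
  subst hM1
  have hr : r = T / 2 := by linarith
  have hT2 : T ^ 2 ≤ 4 := by
    have : (T:ℚ) ^ 2 ≤ 4 := by
      rw [← h4]; push_cast at h5; nlinarith [sq_nonneg s]
    exact_mod_cast this
  have hTl : -2 ≤ T := by nlinarith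
  have hTu : T ≤ 2 := by nlinarith
  push_cast at h5
  have hs1 : s ^ 2 * N = 0 → s = 0 := by
    intro h
    rcases mul_eq_zero.mp h with h | h
    · exact pow_eq_zero_iff (by norm_num) |>.mp h
    · exact absurd h hNq.ne
  have c1 : ∀ q : ℚ, s ^ 2 * N = - 3 / 4 → False := by
    intro _ h
    have hs : s ≠ 0 := by rintro rfl; norm_num at h
    apply not_sq (-3 * N) (by omega)
    refine ⟨3 / (2 * s), ?_⟩
    push_cast
    field_simp
    linear_combination (-4) * h
  interval_cases T
  · right
    have hr' : r = -1 := by rw [hr]; norm_num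
    rw [h1, hs1 (by rw [hr'] at h5; linarith), hr']; simp
  · exfalso
    exact c1 0 (by rw [hr] at h5; norm_num at h5; linarith)
  · exfalso
    have h : s ^ 2 * N = -1 := by rw [hr] at h5; norm_num at h5; linarith
    have hs : s ≠ 0 := by rintro rfl; norm_num at h
    apply not_sq (-N) (by omega)
    refine ⟨1 / s, ?_⟩
    push_cast
    field_simp
    linear_combination (-1) * h
  · exfalso
    exact c1 0 (by rw [hr] at h5; norm_num at h5; linarith)
  · left
    have hr' : r = 1 := by rw [hr]; norm_num
    rw [h1, hs1 (by rw [hr'] at h5; linarith), hr']; simp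

open NumberField ComplexConjugate in
lemma main_div (n : ℕ) (hn : 3 ≤ n) (hnodd : Odd n) (k : ℤ) (hk : 2 ≤ k)
    (h3 : ¬ (3 : ℤ) ∣ (4 * k ^ n - 1)) (w : ℂ) (hw : w ^ 2 = ((9 - (4 * k ^ n - 1) ^ n : ℤ) : ℂ)) :
    n ∣ Nat.card (ClassGroup (𝓞 (IntermediateField.adjoin ℚ {w}))) := by
  have hm4 : 4 * k ^ n ∣ (4 * k ^ n - 1) ^ n + 1 := by
    have := hnodd.add_dvd_pow_add_pow (4 * k ^ n - 1) 1
    simpa using this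
  have hkn : (8:ℤ) ≤ k ^ n := by
    calc (8:ℤ) = 2 ^ 3 := by norm_num
      _ ≤ 2 ^ n := pow_le_pow_right₀ (by norm_num) hn
      _ ≤ k ^ n := pow_le_pow_left₀ (by norm_num) hk n
  obtain ⟨m, hm⟩ : ∃ m, m = 4 * k ^ n - 1 := ⟨_, rfl⟩
  have hmn : 31 ≤ m ^ n := by
    have : m ≤ m ^ n := le_self_pow₀ (by omega) (by omega)
    omega
  obtain ⟨N, hN⟩ : ∃ N, N = 9 - m ^ n := ⟨_, rfl⟩
  rw [← hm] at hm4 h3 hw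
  rw [← hN] at hw
  have hN0 : N < 0 := by omega
  have hN4 : N % 4 = 2 := by
    obtain ⟨c, hc⟩ := hm4
    rw [mul_assoc] at hc
    omega
  have hm2 : m % 2 = 1 := by omega
  have hwi : IsIntegral ℤ w := by
    apply IsIntegral.of_pow (n := 2) (by norm_num)
    rw [hw]
    exact_mod_cast isIntegral_algebraMap (R := ℤ) (A := ℂ) (x := N)
  have hwK : w ∈ IntermediateField.adjoin ℚ {w} := IntermediateField.mem_adjoin_simple_self ℚ w
  have hfd : FiniteDimensional ℚ (IntermediateField.adjoin ℚ {w}) :=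
    IntermediateField.adjoin.finiteDimensional hwi.tower_top
  have hunit := unit_pm N hN0 hN4 w hw
  have hrep := int_rep N hN0 w hw
  have hcw := conj_w N hN0 w hw
  generalize hK : IntermediateField.adjoin ℚ {w} = K at *
  have : NumberField K := { to_charZero := inferInstance, to_finiteDimensional := hfd }
  have hmemi : ∀ x : 𝓞 K, IsIntegral ℤ ((x : K) : ℂ) := fun x =>
    (x.isIntegral_coe).map (K.val.restrictScalars ℤ)
  have hlift : ∀ x : ℂ, x ∈ K → IsIntegral ℤ x → ∃ y : 𝓞 K, ((y : K) : ℂ) = x := by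
    intro x hx hi
    have : IsIntegral ℤ (⟨x, hx⟩ : K) :=
      (isIntegral_algHom_iff (K.val.restrictScalars ℤ) (K.val.injective)).mp hi
    exact ⟨⟨_, this⟩, rfl⟩
  obtain ⟨ω, hω⟩ := hlift w hwK hwi
  have hinj : ∀ x y : 𝓞 K, ((x : K) : ℂ) = ((y : K) : ℂ) → x = y := by
    intro x y h
    exact RingOfIntegers.ext (Subtype.ext h)
  have hω2 : ω ^ 2 = (N : 𝓞 K) := by
    apply hinj
    push_cast
    rw [hω, hw]
    rfl
  have hprod : (3 + ω) * (3 - ω) = (m : 𝓞 K) ^ n := by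
    have : (N : 𝓞 K) = 9 - (m : 𝓞 K) ^ n := by rw [hN]; push_cast; ring
    linear_combination -hω2 - this
  have hcop6 : IsCoprime (6:ℤ) (m ^ n) := by
    apply IsCoprime.pow_right
    rw [show (6:ℤ) = 2 * 3 by norm_num]
    apply IsCoprime.mul_left
    · exact ⟨-(m / 2), 1, by omega⟩
    · exact (Prime.coprime_iff_not_dvd Int.prime_three).mpr h3
  have hcop : IsCoprime (3 + ω) (3 - ω) := by
    obtain ⟨a, b, hab⟩ := hcop6
    have hab' := congrArg (Int.cast : ℤ → 𝓞 K) hab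
    push_cast at hab'
    refine ⟨(a : 𝓞 K) + b * (3 - ω), a, ?_⟩
    linear_combination hab' + (b : 𝓞 K) * hprod
  have hcopI : IsCoprime (Ideal.span {3 + ω}) (Ideal.span {3 - ω}) :=
    (Ideal.isCoprime_span_singleton_iff _ _).mpr hcop
  obtain ⟨I, hI⟩ := exists_eq_pow_of_mul_eq_pow_of_coprime hcopI
    (c := Ideal.span {(m : 𝓞 K)}) (n := n)
    (by rw [Ideal.span_singleton_mul_span_singleton, Ideal.span_singleton_pow, hprod])
  have hmn0 : (m : 𝓞 K) ^ n ≠ 0 := by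
    have : m ^ n ≠ 0 := by omega
    exact_mod_cast this
  have hβ0 : (3 + ω) ≠ 0 := fun h => hmn0 (by rw [← hprod, h, zero_mul])
  have hI0 : I ≠ 0 := by
    rintro rfl
    rw [zero_pow (by omega)] at hI
    exact hβ0 (by simpa using hI)
  have hImem := mem_nonZeroDivisors_of_ne_zero hI0
  have horder : orderOf (ClassGroup.mk0 ⟨I, hImem⟩) = n := by
    apply orderOf_eq_of_pow_and_pow_div_prime (by omega)
    · rw [← map_pow]
      exact (ClassGroup.mk0_eq_one_iff (pow_mem hImem n)).mpr ⟨3 + ω, hI.symm⟩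
    · intro p hp hpn h1
      rw [← map_pow] at h1
      obtain ⟨α, hα⟩ := (ClassGroup.mk0_eq_one_iff (pow_mem hImem (n / p))).mp h1
      rw [Ideal.submodule_span_eq] at hα
      have hassoc : Associated (α ^ p) (3 + ω) := by
        rw [← Ideal.span_singleton_eq_span_singleton, hI, ← Ideal.span_singleton_pow, ← hα,
          ← pow_mul, Nat.div_mul_cancel hpn]
      obtain ⟨u, hu⟩ := hassoc
      have hpodd : Odd p := by
        rw [← Nat.div_mul_cancel hpn] at hnodd
        exact (Nat.odd_mul.mp hnodd).2
      have hu1 : (((u : 𝓞 K) : K) : ℂ) = 1 ∨ (((u : 𝓞 K) : K) : ℂ) = -1 := by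
        apply hunit _ (((↑(u⁻¹) : 𝓞 K) : K) : ℂ) (SetLike.coe_mem _) (SetLike.coe_mem _) (hmemi _) (hmemi _)
        have : (u : 𝓞 K) * (↑(u⁻¹) : 𝓞 K) = 1 := u.mul_inv
        have := congrArg (fun x : 𝓞 K => ((x : K) : ℂ)) this
        push_cast at this
        exact this
      have hz : ∃ z : 𝓞 K, z ^ p = 3 + ω := by
        rcases hu1 with h | h
        · have : (u : 𝓞 K) = 1 := hinj _ _ (by rw [h]; simp)
          exact ⟨α, by rw [← hu, this, mul_one]⟩
        · have : (u : 𝓞 K) = -1 := hinj _ _ (by rw [h]; simp)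
          exact ⟨-α, by rw [← hu, this, hpodd.neg_pow]; ring⟩
      obtain ⟨z, hz⟩ := hz
      obtain ⟨r, s, T, M, -, hT, hM, -, -⟩ := hrep ((z : K) : ℂ) (SetLike.coe_mem _) (hmemi z)
      generalize hζ : ((z : K) : ℂ) = ζ at *
      have hzc : ζ ^ p = 3 + w := by
        have := congrArg (fun x : 𝓞 K => ((x : K) : ℂ)) hz
        push_cast at this
        rw [hζ, hω] at this
        exact this
      have hzc' : (conj ζ) ^ p = 3 - w := by
        rw [← map_pow, hzc, map_add, hcw, map_ofNat]; ring
      have hMeq : M = m ^ (n / p) := by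
        apply hpodd.strictMono_pow.injective
        show M ^ p = (m ^ (n / p)) ^ p
        rw [← pow_mul, Nat.div_mul_cancel hpn]
        have : (M : ℂ) ^ p = (m : ℂ) ^ n := by
          rw [← hM, mul_pow, hzc, hzc']
          have : (N : ℂ) = 9 - (m : ℂ) ^ n := by rw [hN]; push_cast; ring
          linear_combination -hw - this
        exact_mod_cast this
      have hV := VV_eq T M ζ (conj ζ) hT hM p
      rw [hzc, hzc'] at hV
      have hV' : VV T M p = 6 := by
        have : (VV T M p : ℂ) = 6 := by rw [← hV]; ring
        exact_mod_cast this
      rw [hMeq, hm] at hV'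
      exact arith n hn hnodd k hk p hp hpn T hV'
  rw [← horder]
  exact orderOf_dvd_natCard _

/-- Let `n ≥ 3` be an odd integer and `k ≥ 2` an integer with `3 ∤ (4kⁿ − 1)`, and set
`d = 4(1 − 4kⁿ)ⁿ`. Then `d + 36 = 4(9 − (4kⁿ − 1)ⁿ)`, so
`ℚ(√(d + 36)) = ℚ(√(9 − (4kⁿ − 1)ⁿ))`, and `n` divides the class number of
`ℚ(√(d + 36))`. -/
theorem classNumber_dvd_d_add_thirtySix
    (n : ℕ) (hn : 3 ≤ n) (hnodd : Odd n) (k : ℤ) (hk : 2 ≤ k)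
    (h3 : ¬ (3 : ℤ) ∣ (4 * k ^ n - 1))
    (d : ℤ) (hd : d = 4 * (1 - 4 * k ^ n) ^ n) :
    d + 36 = 4 * (9 - (4 * k ^ n - 1) ^ n) ∧
      Qsqrt (d + 36) = Qsqrt (9 - (4 * k ^ n - 1) ^ n) ∧
      n ∣ classNumSqrt (d + 36) := by
  have hm : d + 36 = 4 * (9 - (4 * k ^ n - 1) ^ n) := by
    have h : (1 - 4 * k ^ n) ^ n = -(4 * k ^ n - 1) ^ n := by
      rw [← hnodd.neg_pow]; ring
    rw [hd, h]; ring
  have hq : Qsqrt (d + 36) = Qsqrt (9 - (4 * k ^ n - 1) ^ n) := by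
    rw [hm]
    generalize (9 - (4 * k ^ n - 1) ^ n) = N
    unfold Qsqrt
    have h2 : ((4 * N : ℤ) : ℂ) ^ ((1:ℂ)/2) = 2 * (N : ℂ) ^ ((1:ℂ)/2) := by
      have h4 : ((4:ℝ):ℂ) ^ ((1:ℂ)/2) = 2 := by
        rw [show ((4:ℝ):ℂ) = (2:ℂ) ^ 2 by norm_num]
        rw [show (1:ℂ)/2 = ((2:ℕ):ℂ)⁻¹ by norm_num]
        exact Complex.pow_cpow_nat_inv (by norm_num)
          (by simp [Complex.arg]; positivity) (by simp [Complex.arg]; positivity)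
      suffices h : ((4 * N : ℤ) : ℂ) ^ ((1:ℂ)/2) = ((4:ℝ):ℂ) ^ ((1:ℂ)/2) * (N : ℂ) ^ ((1:ℂ)/2) by
        rw [h, h4]
      by_cases hN : (N : ℂ) = 0
      · push_cast; rw [hN]; simp
      · rw [Complex.cpow_def_of_ne_zero (x := ((4:ℝ):ℂ)) (by norm_num),
          Complex.cpow_def_of_ne_zero hN, ← Complex.exp_add, ← add_mul, ← Complex.ofReal_log (by norm_num),
          ← Complex.log_ofReal_mul (by norm_num) hN, ← Complex.cpow_def_of_ne_zero (by simpa using hN)]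
        push_cast; rfl
    rw [h2]
    apply le_antisymm
    · rw [IntermediateField.adjoin_simple_le_iff]
      exact mul_mem (by simpa using IntermediateField.natCast_mem _ 2) (IntermediateField.mem_adjoin_simple_self ℚ _)
    · rw [IntermediateField.adjoin_simple_le_iff]
      have := mul_mem (IntermediateField.algebraMap_mem (IntermediateField.adjoin ℚ {2 * (N : ℂ) ^ ((1:ℂ)/2)}) (1/2 : ℚ)) (IntermediateField.mem_adjoin_simple_self ℚ (2 * (N : ℂ) ^ ((1:ℂ)/2)))
      convert this using 1
      simp
  refine ⟨hm, hq, ?_⟩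
  have hcl : ∀ K L : IntermediateField ℚ ℂ, K = L →
      Nat.card (ClassGroup (NumberField.RingOfIntegers K)) =
        Nat.card (ClassGroup (NumberField.RingOfIntegers L)) := by
    rintro K L rfl
    rfl
  unfold classNumSqrt
  rw [hcl _ _ hq]
  unfold Qsqrt
  apply main_div n hn hnodd k hk h3
  rw [one_div]
  exact_mod_cast Complex.cpow_nat_inv_pow _ (n := 2) (by norm_num)
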